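/- For words over the four-letter alphabet {a, a⁻¹, b, b⁻¹}, the number of reduced bracelets of length n that are not proper powers (i.e., no representative word is a concatenation of k ≥ 2 copies of a shorter word) is: 2 for n = 1, 2 for n = 2, 4 for n = 3, 9 for n = 4, 24 for n = 5, 58 for n = 6, 156 for n = 7, 405 for n = 8, 1092 for n = 9, and 2940 for n = 10. -/

import Mathlib

/-- The group-theoretic inverse of a letter in the alphabet `{a, a⁻¹, b, b⁻¹}`,
where a letter is a pair (generator, sign). -/
def invLetter (x : Fin 2 × Bool) : Fin 2 × Bool := (x.1, !x.2)

/-- The group-theoretic inverse of a word: reverse the word and invert each letter. -/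
def wordInv (l : List (Fin 2 × Bool)) : List (Fin 2 × Bool) := (l.map invLetter).reverse

/-- A word is freely reduced if no two adjacent letters are mutually inverse. -/
def FreelyReduced (l : List (Fin 2 × Bool)) : Prop :=
  l.Chain' (fun x y => y ≠ invLetter x)

/-- A word is cyclically reduced if it is freely reduced and its first letter is
not the inverse of its last letter. -/
def CyclicallyReduced (l : List (Fin 2 × Bool)) : Prop :=
  FreelyReduced l ∧ ∀ x ∈ l.head?, ∀ y ∈ l.getLast?, x ≠ invLetter y

/-- The type of freely and cyclically reduced words of length `n` over the
alphabet `{a, a⁻¹, b, b⁻¹}`. -/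
def CRWord (n : ℕ) := {l : List (Fin 2 × Bool) // l.length = n ∧ CyclicallyReduced l}

/-- One basic move between cyclically reduced words: a cyclic rotation or a
group-theoretic inversion.  Reduced bracelets are the classes of the
equivalence relation generated by these moves. -/
def braceletStep (n : ℕ) (x y : CRWord n) : Prop :=
  y.val = x.val.rotate 1 ∨ y.val = wordInv x.val

/-- A word is a proper power if it is the concatenation of `k ≥ 2` copies of a
shorter word. -/
def IsProperPower (l : List (Fin 2 × Bool)) : Prop :=
  ∃ (k : ℕ) (m : List (Fin 2 × Bool)), 2 ≤ k ∧ m.length < l.length ∧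
    l = (List.replicate k m).flatten

/-- The number of reduced bracelets of length `n` none of whose representative
words is a proper power (the "Lyndon word" count of the paper). -/
noncomputable def lyndonBraceletCount (n : ℕ) : ℕ :=
  Nat.card {c : Quot (braceletStep n) //
    ∀ l : CRWord n, Quot.mk (braceletStep n) l = c → ¬ IsProperPower l.val}

abbrev Ltr := Fin 2 × Bool

def RR (x y : Ltr) : Prop := y ≠ invLetter x

instance : DecidableRel RR := fun x y => by unfold RR; infer_instance

theorem invLetter_invLetter (x : Ltr) : invLetter (invLetter x) = x := by
  simp [invLetter]

theorem wordInv_wordInv (l : List Ltr) : wordInv (wordInv l) = l := by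
  simp [wordInv, Function.comp_def, invLetter_invLetter]

theorem length_wordInv (l : List Ltr) : (wordInv l).length = l.length := by
  simp [wordInv]

theorem cr_iff (l : List Ltr) : CyclicallyReduced l ↔ (l ++ l).IsChain RR := by
  rw [List.isChain_append]
  unfold CyclicallyReduced FreelyReduced List.Chain' RR
  constructor
  · rintro ⟨h1, h2⟩
    exact ⟨h1, h1, fun x hx y hy => h2 y hy x hx⟩
  · rintro ⟨h1, _, h2⟩
    exact ⟨h1, fun x hx y hy => h2 y hy x hx⟩

theorem cr_cons (x : Ltr) (t : List Ltr) :
    CyclicallyReduced (x :: t) ↔ (x :: (t ++ [x])).IsChain RR := by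
  rw [cr_iff, List.isChain_append, ← List.cons_append, List.isChain_append]
  simp only [List.head?_cons, List.isChain_singleton]
  tauto

theorem cr_rotate_one (l : List Ltr) (h : CyclicallyReduced l) :
    CyclicallyReduced (l.rotate 1) := by
  match l with
  | [] => simpa using h
  | [x] => simpa using h
  | x :: b :: t =>
    rw [cr_cons] at h
    have : (x :: b :: t).rotate 1 = b :: (t ++ [x]) := by simp
    rw [this, cr_cons]
    simp only [List.cons_append, List.isChain_cons_cons] at h
    rw [← List.cons_append, List.isChain_append]
    refine ⟨h.2, by simp, ?_⟩
    intro u hu v hv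
    rw [← List.cons_append] at hu
    simp only [List.getLast?_append, List.getLast?_singleton, List.head?_cons, Option.mem_def] at hu hv
    simp at hu hv
    rw [← hu, ← hv]; exact h.1

theorem cr_rotate (l : List Ltr) (h : CyclicallyReduced l) (i : ℕ) :
    CyclicallyReduced (l.rotate i) := by
  induction i with
  | zero => simpa using h
  | succ i ih => rw [← List.rotate_rotate]; exact cr_rotate_one _ ih

theorem wordInv_append (l m : List Ltr) : wordInv (l ++ m) = wordInv m ++ wordInv l := by
  simp [wordInv]

theorem cr_wordInv (l : List Ltr) (h : CyclicallyReduced l) : CyclicallyReduced (wordInv l) := by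
  rw [cr_iff] at h ⊢
  rw [← wordInv_append]
  unfold wordInv
  rw [List.isChain_reverse, List.isChain_map]
  refine h.imp ?_
  intro a b hab
  unfold RR at hab ⊢
  rw [invLetter_invLetter]
  exact fun e => hab e.symm

theorem not_self_inv (l : List Ltr) (h : l.IsChain RR) (e : wordInv l = l) : l = [] := by
  induction l using List.bidirectionalRec with
  | nil => rfl
  | singleton a =>
    exfalso
    obtain ⟨a, s⟩ := a
    simp [wordInv, invLetter] at e
  | cons_append a m b ih =>
    exfalso
    have e2 : wordInv (a :: (m ++ [b])) = invLetter b :: (wordInv m ++ [invLetter a]) := by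
      simp [wordInv]
    rw [e2, List.cons.injEq] at e
    obtain ⟨e3, e4⟩ := e
    have e5 := List.append_inj_left' e4 (by simp)
    have hm : m.IsChain RR := (List.IsChain.tail h).left_of_append
    have := ih hm e5
    subst this
    simp [RR] at h
    apply h
    rw [← e3, invLetter_invLetter]

theorem not_conj_inv (l : List Ltr) (h : CyclicallyReduced l) (e : l ~r wordInv l) : l = [] := by
  obtain ⟨i, hi⟩ := e
  rw [List.rotate_eq_drop_append_take_mod] at hi
  set j := i % l.length
  have h2 : wordInv l = wordInv (l.drop j) ++ wordInv (l.take j) := by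
    rw [← wordInv_append, List.take_append_drop]
  rw [h2] at hi
  have hA := List.append_inj hi (by rw [length_wordInv])
  have hl : l.IsChain RR := h.1
  have hl2 := hl
  rw [← List.take_append_drop j l] at hl2
  have a1 := not_self_inv _ hl2.left_of_append hA.2.symm
  have a2 := not_self_inv _ hl2.right_of_append hA.1.symm
  rw [← List.take_append_drop j l, a1, a2]; rfl

/-! Powers -/

def pw (k : ℕ) (m : List Ltr) : List Ltr := (List.replicate k m).flatten

theorem pw_succ (k : ℕ) (m : List Ltr) : pw (k+1) m = m ++ pw k m := by
  simp [pw, List.replicate_succ]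

theorem pw_zero (m : List Ltr) : pw 0 m = [] := rfl

theorem length_pw (k : ℕ) (m : List Ltr) : (pw k m).length = k * m.length := by
  simp [pw]

theorem pw_add (j k : ℕ) (m : List Ltr) : pw (j + k) m = pw j m ++ pw k m := by
  unfold pw
  rw [List.replicate_add, List.flatten_append]

theorem pw_comm (k : ℕ) (m : List Ltr) : m ++ pw k m = pw k m ++ m := by
  have h := pw_add k 1 m
  rw [pw_succ k] at h
  rw [h]; simp [pw]

theorem wordInv_pw (k : ℕ) (m : List Ltr) : wordInv (pw k m) = pw k (wordInv m) := by
  induction k with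
  | zero => rfl
  | succ k ih => rw [pw_succ, wordInv_append, ih, pw_succ, pw_comm]

theorem pw_nil (k : ℕ) : pw k [] = [] := by simp [pw]

theorem pw_swap (k : ℕ) (a b : List Ltr) : a ++ pw k (b ++ a) = pw k (a ++ b) ++ a := by
  induction k with
  | zero => simp [pw]
  | succ k ih => simp only [pw_succ, List.append_assoc, ih]

theorem rotate_one_pw (k : ℕ) (m : List Ltr) : (pw k m).rotate 1 = pw k (m.rotate 1) := by
  cases m with
  | nil => simp [pw_nil]
  | cons x t =>
    cases k with
    | zero => simp [pw]
    | succ k =>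
      have := pw_swap k [x] t
      simp only [List.cons_append, List.nil_append] at this
      simp [pw_succ, this]

theorem rotate_pw (k : ℕ) (m : List Ltr) (i : ℕ) : (pw k m).rotate i = pw k (m.rotate i) := by
  induction i with
  | zero => simp
  | succ i ih => rw [← List.rotate_rotate, ih, rotate_one_pw, List.rotate_rotate]

theorem pw_inj (k : ℕ) (hk : 0 < k) (m m' : List Ltr) (hl : m.length = m'.length)
    (h : pw k m = pw k m') : m = m' := by
  obtain ⟨k, rfl⟩ : ∃ j, k = j + 1 := ⟨k - 1, by omega⟩
  rw [pw_succ, pw_succ] at h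
  exact (List.append_inj h hl).1

theorem comm_pw (A : List Ltr) (k : ℕ) (B : List Ltr) (hB : B.length = k * A.length)
    (h : A ++ B = B ++ A) : B = pw k A := by
  induction k generalizing B with
  | zero => simpa [pw] using hB
  | succ k ih =>
    have hp : A <+: B ++ A := ⟨B, h⟩
    have : A <+: B := List.prefix_of_prefix_length_le hp (List.prefix_append _ _)
      (by rw [hB]; nlinarith)
    obtain ⟨C, rfl⟩ := this
    rw [pw_succ]
    congr 1
    apply ih
    · simp at hB; nlinarith
    · simpa using h

theorem eq_pw_of_rotate (l : List Ltr) (d k : ℕ) (hd : 0 < d) (hk : 0 < k)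
    (hl : l.length = k * d) (h : l.rotate d = l) : l = pw k (l.take d) := by
  obtain ⟨k, rfl⟩ : ∃ j, k = j + 1 := ⟨k - 1, by omega⟩
  have hle : d ≤ l.length := by rw [hl]; nlinarith
  have ht : (l.take d).length = d := by simp [hle]
  rw [List.rotate_eq_drop_append_take hle] at h
  rw [pw_succ, ← comm_pw (l.take d) k (l.drop d), List.take_append_drop]
  · rw [ht, List.length_drop, hl, Nat.succ_mul]; omega
  · rw [h, List.take_append_drop]

theorem cr_pw (k : ℕ) (hk : 0 < k) (m : List Ltr) :
    CyclicallyReduced (pw k m) ↔ CyclicallyReduced m := by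
  by_cases hm : m = []
  · subst hm; rw [pw_nil]
  obtain ⟨k, rfl⟩ : ∃ j, k = j + 1 := ⟨k - 1, by omega⟩
  rw [cr_iff, cr_iff, ← pw_add, List.isChain_append]
  constructor
  · intro h
    have : pw (k+1+(k+1)) m = (m ++ m) ++ pw (k + k) m := by
      rw [show k+1+(k+1) = (k+k)+1+1 by ring, pw_succ, pw_succ, List.append_assoc]
    rw [this] at h
    have := h.left_of_append
    rwa [List.isChain_append] at this
  · intro h
    unfold pw
    rw [List.isChain_flatten (by simp [Ne.symm hm])]
    refine ⟨?_, List.isChain_replicate_of_rel _ h.2.2⟩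
    intro l hl
    rw [List.eq_of_mem_replicate hl]
    exact h.1

/-! Minimal periods -/

def rot (l : List Ltr) : List Ltr := l.rotate 1

theorem rot_iter (i : ℕ) (l : List Ltr) : rot^[i] l = l.rotate i := by
  induction i with
  | zero => simp
  | succ i ih => rw [Function.iterate_succ_apply', ih, rot, List.rotate_rotate]

noncomputable def per (l : List Ltr) : ℕ := Function.minimalPeriod rot l

theorem per_dvd_iff (l : List Ltr) (i : ℕ) : per l ∣ i ↔ l.rotate i = l := by
  rw [per, ← Function.isPeriodicPt_iff_minimalPeriod_dvd, Function.IsPeriodicPt,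
    Function.IsFixedPt, rot_iter]

theorem per_dvd_length (l : List Ltr) : per l ∣ l.length := by
  rw [per_dvd_iff, List.rotate_length]

theorem per_pw (k : ℕ) (hk : 0 < k) (m : List Ltr) : per (pw k m) = per m := by
  apply Nat.dvd_antisymm
  · rw [per_dvd_iff, rotate_pw, (per_dvd_iff m _).1 dvd_rfl]
  · rw [per_dvd_iff]
    apply pw_inj k hk _ _ (by simp)
    rw [← rotate_pw, (per_dvd_iff _ _).1 dvd_rfl]

theorem pp_iff (l : List Ltr) (hl : l ≠ []) : IsProperPower l ↔ per l ≠ l.length := by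
  have hpos : 0 < l.length := List.length_pos_of_ne_nil hl
  constructor
  · rintro ⟨k, m, hk, hlt, rfl⟩ h
    change per (pw k m) = (pw k m).length at h
    have h1 : per (pw k m) ∣ m.length := by
      rw [per_pw k (by omega)]; exact per_dvd_length m
    have hm : 0 < m.length := by
      rcases Nat.eq_zero_or_pos m.length with h0 | h0
      · rw [List.length_eq_zero_iff] at h0
        subst h0
        simp at hl
      · exact h0
    have := Nat.le_of_dvd hm h1
    change m.length < (pw k m).length at hlt
    omega
  · intro h
    obtain ⟨k, hk⟩ := per_dvd_length l
    have hk0 : 0 < k := by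
      rcases Nat.eq_zero_or_pos k with h0 | h0
      · subst h0; omega
      · exact h0
    have hp : 0 < per l := by
      rcases Nat.eq_zero_or_pos (per l) with h0 | h0
      · rw [h0] at hk; omega
      · exact h0
    have hk2 : 2 ≤ k := by
      by_contra hc
      have : k = 1 := by omega
      subst this
      omega
    have hlt : per l < l.length := by rw [hk]; nlinarith
    refine ⟨k, l.take (per l), hk2, by simp [hlt], ?_⟩
    exact eq_pw_of_rotate l (per l) k hp hk0 (by rw [hk, mul_comm]) ((per_dvd_iff l _).1 dvd_rfl)

theorem pp_rotate (l : List Ltr) (i : ℕ) (h : IsProperPower l) : IsProperPower (l.rotate i) := by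
  obtain ⟨k, m, hk, hlt, rfl⟩ := h
  exact ⟨k, m.rotate i, hk, by simpa using hlt, rotate_pw k m i⟩

theorem pp_wordInv (l : List Ltr) (h : IsProperPower l) : IsProperPower (wordInv l) := by
  obtain ⟨k, m, hk, hlt, rfl⟩ := h
  exact ⟨k, wordInv m, hk, by simpa [length_wordInv] using hlt, wordInv_pw k m⟩

/-! Enumeration -/

def en : ℕ → Ltr → Ltr → Finset (List Ltr)
  | 0, a, z => if RR a z then {[]} else ∅
  | m+1, a, z => (Finset.univ.filter (RR a)).biUnion fun b => (en m b z).image (List.cons b)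

theorem mem_en (m : ℕ) (a z : Ltr) (t : List Ltr) :
    t ∈ en m a z ↔ t.length = m ∧ (a :: (t ++ [z])).IsChain RR := by
  induction m generalizing a t with
  | zero =>
    unfold en
    split_ifs with h
    · simp only [Finset.mem_singleton, List.length_eq_zero_iff]
      constructor
      · rintro rfl; simp [h]
      · exact fun h => h.1
    · simp only [Finset.notMem_empty, List.length_eq_zero_iff, false_iff]
      rintro ⟨rfl, h2⟩
      simp at h2
      exact h h2
  | succ m ih =>
    simp only [en, Finset.mem_biUnion, Finset.mem_filter, Finset.mem_univ, true_and,
      Finset.mem_image]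
    constructor
    · rintro ⟨b, hb, s, hs, rfl⟩
      rw [ih] at hs
      refine ⟨by simp [hs.1], ?_⟩
      simp only [List.cons_append, List.isChain_cons_cons]
      exact ⟨hb, hs.2⟩
    · rintro ⟨h1, h2⟩
      match t with
      | [] => simp at h1
      | b :: s =>
        simp only [List.cons_append, List.isChain_cons_cons] at h2
        refine ⟨b, h2.1, s, ?_, rfl⟩
        rw [ih]
        exact ⟨by simpa using h1, h2.2⟩

theorem card_biUnion_cons (S : Finset Ltr) (f : Ltr → Finset (List Ltr)) :
    (S.biUnion fun b => (f b).image (List.cons b)).card = ∑ b ∈ S, (f b).card := by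
  rw [Finset.card_biUnion]
  · refine Finset.sum_congr rfl fun b _ => ?_
    exact Finset.card_image_of_injective _ (List.cons_injective)
  · intro x _ y _ hxy
    rw [Function.onFun, Finset.disjoint_left]
    intro l h1 h2
    simp only [Finset.mem_image] at h1 h2
    obtain ⟨s, _, rfl⟩ := h1
    obtain ⟨s', _, h⟩ := h2
    rw [List.cons.injEq] at h
    exact hxy h.1.symm

/-- the three values of the transfer recursion -/
def tr : ℕ → ℕ × ℕ × ℕ
  | 0 => (1, 0, 1)
  | m+1 => let p := tr m
    (p.1 + 2 * p.2.2, p.2.1 + 2 * p.2.2, p.1 + p.2.1 + p.2.2)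

def pick (p : ℕ × ℕ × ℕ) (a z : Ltr) : ℕ :=
  if z = a then p.1 else if z = invLetter a then p.2.1 else p.2.2

theorem card_en (m : ℕ) (a z : Ltr) : (en m a z).card = pick (tr m) a z := by
  induction m generalizing a with
  | zero =>
    revert a z
    decide
  | succ m ih =>
    rw [en, card_biUnion_cons]
    simp only [ih, tr]
    generalize tr m = p
    rw [Finset.sum_filter]
    obtain ⟨a, s⟩ := a
    obtain ⟨z, r⟩ := z
    fin_cases a <;> fin_cases z <;> cases s <;> cases r <;>
      simp [Fintype.sum_prod_type, pick, RR, invLetter] <;> ring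

def crw (n : ℕ) : Finset (List Ltr) :=
  Finset.univ.biUnion fun x => (en (n-1) x x).image (List.cons x)

theorem mem_crw (n : ℕ) (hn : 0 < n) (l : List Ltr) :
    l ∈ crw n ↔ l.length = n ∧ CyclicallyReduced l := by
  simp only [crw, Finset.mem_biUnion, Finset.mem_univ, true_and, Finset.mem_image, mem_en]
  constructor
  · rintro ⟨x, t, ⟨h1, h2⟩, rfl⟩
    exact ⟨by simp; omega, (cr_cons x t).2 h2⟩
  · rintro ⟨h1, h2⟩
    match l with
    | [] => simp at h1; omega
    | x :: t =>
      exact ⟨x, t, ⟨by simp at h1; omega, (cr_cons x t).1 h2⟩, rfl⟩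

theorem card_crw (n : ℕ) : (crw n).card = 4 * (tr (n-1)).1 := by
  rw [crw, card_biUnion_cons]
  simp [card_en, pick]

noncomputable def prim (n : ℕ) : Finset (List Ltr) := (crw n).filter fun l => per l = n

theorem card_crw_eq_sum (n : ℕ) (hn : 0 < n) :
    (crw n).card = ∑ d ∈ n.divisors, (prim d).card := by
  rw [Finset.card_eq_sum_card_fiberwise (f := per) (t := n.divisors)]
  · refine Finset.sum_congr rfl fun d hd => ?_
    obtain ⟨k, hk⟩ := Nat.dvd_of_mem_divisors hd
    have hd0 : 0 < d := Nat.pos_of_mem_divisors hd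
    have hk0 : 0 < k := Nat.pos_of_ne_zero (by rintro rfl; omega)
    symm
    apply Finset.card_bij (fun m _ => pw k m)
    · intro m hm
      simp only [prim, Finset.mem_filter, mem_crw _ hd0, mem_crw _ hn] at hm ⊢
      refine ⟨⟨?_, (cr_pw k hk0 m).2 hm.1.2⟩, ?_⟩
      · rw [length_pw, hm.1.1, hk, mul_comm]
      · rw [per_pw k hk0, hm.2]
    · intro m hm m' hm' h
      simp only [prim, Finset.mem_filter, mem_crw _ hd0] at hm hm'
      exact pw_inj k hk0 m m' (by rw [hm.1.1, hm'.1.1]) h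
    · intro l hl
      simp only [Finset.mem_filter, mem_crw _ hn] at hl
      obtain ⟨⟨hl1, hl2⟩, hl3⟩ := hl
      have e := eq_pw_of_rotate l d k hd0 hk0 (by rw [hl1, hk, mul_comm])
        ((per_dvd_iff l d).1 (by rw [hl3]))
      refine ⟨l.take d, ?_, e.symm⟩
      simp only [prim, Finset.mem_filter, mem_crw _ hd0]
      refine ⟨⟨?_, ?_⟩, ?_⟩
      · rw [List.length_take, hl1, hk]; apply min_eq_left; nlinarith
      · rw [← cr_pw k hk0, ← e]; exact hl2
      · rw [← per_pw k hk0, ← e]; exact hl3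
  · intro l hl
    have hl := (mem_crw n hn l).1 hl
    simp only [Finset.mem_coe, Nat.mem_divisors]
    exact ⟨hl.1 ▸ per_dvd_length l, by omega⟩

/-! Classes -/

theorem wordInv_rotated {l m : List Ltr} (h : l ~r m) : wordInv l ~r wordInv m :=
  (h.map invLetter).reverse

theorem mk_eq_imp (n : ℕ) (x y : CRWord n)
    (h : Quot.mk (braceletStep n) x = Quot.mk (braceletStep n) y) :
    x.val ~r y.val ∨ wordInv x.val ~r y.val := by
  have h' := Quot.eqvGen_exact h
  clear h
  induction h' with
  | rel x y h =>
    rcases h with h | h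
    · exact Or.inl ⟨1, h.symm⟩
    · exact Or.inr (by rw [h])
  | refl x => exact Or.inl (List.IsRotated.refl _)
  | symm x y _ ih =>
    rcases ih with h | h
    · exact Or.inl h.symm
    · right
      have := wordInv_rotated h
      rw [wordInv_wordInv] at this
      exact this.symm
  | trans x y z _ _ h1 h2 =>
    rcases h1 with h1 | h1 <;> rcases h2 with h2 | h2
    · exact Or.inl (h1.trans h2)
    · exact Or.inr ((wordInv_rotated h1).trans h2)
    · exact Or.inr (h1.trans h2)
    · have := wordInv_rotated h1
      rw [wordInv_wordInv] at this
      exact Or.inl (this.trans h2)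

def rotW {n : ℕ} (i : ℕ) (x : CRWord n) : CRWord n :=
  ⟨x.val.rotate i, by rw [List.length_rotate]; exact x.2.1, cr_rotate _ x.2.2 i⟩

def invW {n : ℕ} (x : CRWord n) : CRWord n :=
  ⟨wordInv x.val, by rw [length_wordInv]; exact x.2.1, cr_wordInv _ x.2.2⟩

theorem mk_invW {n : ℕ} (x : CRWord n) :
    Quot.mk (braceletStep n) (invW x) = Quot.mk (braceletStep n) x :=
  (Quot.sound (r := braceletStep n) (show braceletStep n x (invW x) from Or.inr rfl)).symm

theorem mk_rotW {n : ℕ} (i : ℕ) (x : CRWord n) :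
    Quot.mk (braceletStep n) (rotW i x) = Quot.mk (braceletStep n) x := by
  induction i with
  | zero =>
    congr 1
    exact Subtype.ext (by simp [rotW])
  | succ i ih =>
    rw [← ih]
    have h : braceletStep n (rotW i x) (rotW (i+1) x) :=
      Or.inl (by simp [rotW, List.rotate_rotate])
    exact (Quot.sound h).symm

def act {n : ℕ} (p : Fin n × Bool) (x : CRWord n) : CRWord n :=
  rotW p.1 (if p.2 then invW x else x)

theorem mk_act {n : ℕ} (p : Fin n × Bool) (x : CRWord n) :
    Quot.mk (braceletStep n) (act p x) = Quot.mk (braceletStep n) x := by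
  unfold act
  rw [mk_rotW]
  split_ifs
  · exact mk_invW x
  · rfl

theorem rotated_lt {n : ℕ} (hn : 0 < n) {l m : List Ltr} (hl : l.length = n) (h : l ~r m) :
    ∃ i : Fin n, l.rotate i = m := by
  obtain ⟨i, hi⟩ := h
  refine ⟨⟨i % n, Nat.mod_lt _ hn⟩, ?_⟩
  have := List.rotate_mod l i
  rw [hl] at this
  rw [← hi]
  exact this

theorem exists_act {n : ℕ} (hn : 0 < n) (x y : CRWord n)
    (h : Quot.mk (braceletStep n) x = Quot.mk (braceletStep n) y) : ∃ p, act p x = y := by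
  rcases mk_eq_imp n x y h with h | h
  · obtain ⟨i, hi⟩ := rotated_lt hn x.2.1 h
    exact ⟨(i, false), Subtype.ext (by simpa [act, rotW] using hi)⟩
  · obtain ⟨i, hi⟩ := rotated_lt hn (by rw [length_wordInv]; exact x.2.1) h
    exact ⟨(i, true), Subtype.ext (by simpa [act, rotW, invW] using hi)⟩

theorem pp_class {n : ℕ} (x y : CRWord n)
    (h : Quot.mk (braceletStep n) x = Quot.mk (braceletStep n) y) (hx : IsProperPower x.val) :
    IsProperPower y.val := by
  rcases mk_eq_imp n x y h with ⟨i, h⟩ | ⟨i, h⟩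
  · rw [← h]; exact pp_rotate _ _ hx
  · rw [← h]; exact pp_rotate _ _ (pp_wordInv _ hx)

theorem rotate_inj_of_prim {n : ℕ} (hn : 0 < n) (l : List Ltr) (hl : l.length = n)
    (hp : ¬ IsProperPower l) (i j : ℕ) (hi : i < n) (hj : j < n) (h : l.rotate i = l.rotate j) :
    i = j := by
  have hne : l ≠ [] := by rintro rfl; simp at hl; omega
  rw [pp_iff l hne, not_not, hl] at hp
  rw [← rot_iter, ← rot_iter] at h
  exact (Function.iterate_eq_iterate_iff_of_lt_minimalPeriod (by rw [← per, hp]; exact hi)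
    (by rw [← per, hp]; exact hj)).1 h

theorem act_inj {n : ℕ} (hn : 0 < n) (x : CRWord n) (hx : ¬ IsProperPower x.val)
    (p q : Fin n × Bool) (h : act p x = act q x) : p = q := by
  have hv := congrArg Subtype.val h
  obtain ⟨i, b⟩ := p
  obtain ⟨j, c⟩ := q
  have hne : x.val ≠ [] := by
    intro h0
    have := x.2.1
    rw [h0] at this
    simp at this; omega
  have key : ∀ i j : ℕ, (wordInv x.val).rotate i ≠ x.val.rotate j := by
    intro i j h
    apply hne
    apply not_conj_inv _ x.2.2
    have h1 : x.val ~r x.val.rotate j := ⟨j, rfl⟩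
    rw [← h] at h1
    exact h1.trans (List.IsRotated.symm ⟨i, rfl⟩)
  have hx' : ¬ IsProperPower (wordInv x.val) := fun h => hx (by
    have := pp_wordInv _ h
    rwa [wordInv_wordInv] at this)
  cases b <;> cases c <;> simp [act, rotW, invW] at hv
  · have := rotate_inj_of_prim hn _ x.2.1 hx i j i.2 j.2 hv
    rw [Fin.ext this]
  · exact absurd hv.symm (key _ _)
  · exact absurd hv (key _ _)
  · have := rotate_inj_of_prim hn _ (by rw [length_wordInv]; exact x.2.1) hx' i j i.2 j.2 hv
    rw [Fin.ext this]

theorem count_mul (n : ℕ) (hn : 0 < n) : lyndonBraceletCount n * (n * 2) = (prim n).card := by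
  have e1 : n * 2 = Nat.card (Fin n × Bool) := by simp
  rw [lyndonBraceletCount, e1, ← Nat.card_prod, ← Nat.card_eq_finsetCard]
  have hrep : ∀ c : Quot (braceletStep n), Quot.mk (braceletStep n) c.out = c := Quot.out_eq
  have hmem : ∀ l : List Ltr, l ∈ prim n ↔
      (l.length = n ∧ CyclicallyReduced l) ∧ ¬ IsProperPower l := by
    intro l
    simp only [prim, Finset.mem_filter, mem_crw n hn]
    refine and_congr_right fun h => ?_
    have hne : l ≠ [] := by
      intro h0
      rw [h0] at h
      simp at h; omega
    rw [pp_iff l hne, not_not, h.1]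
  refine Nat.card_eq_of_bijective
    (fun q => (⟨(act q.2 q.1.1.out).val, ?_⟩ : {l // l ∈ prim n})) ⟨?_, ?_⟩
  · rw [hmem]
    exact ⟨(act q.2 q.1.1.out).2, q.1.2 _ (by rw [mk_act, hrep])⟩
  · rintro ⟨⟨c, hc⟩, p⟩ ⟨⟨c', hc'⟩, p'⟩ h
    have h0 : (act p c.out).val = (act p' c'.out).val := Subtype.mk.inj h
    have h1 : act p c.out = act p' c'.out := Subtype.ext h0
    have h2 : c = c' := by
      rw [← hrep c, ← hrep c', ← mk_act p, ← mk_act p' c'.out, h1]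
    subst h2
    rw [act_inj hn c.out (hc _ (hrep c)) p p' h1]
  · rintro ⟨l, hl⟩
    have hl' := (hmem l).1 hl
    let x : CRWord n := ⟨l, hl'.1⟩
    obtain ⟨p, hp⟩ := exists_act hn (Quot.mk (braceletStep n) x).out x (hrep _)
    refine ⟨⟨⟨Quot.mk (braceletStep n) x, ?_⟩, p⟩, ?_⟩
    · intro y hy hpp
      exact hl'.2 (pp_class y x hy hpp)
    · have h0 : (act p (Quot.mk (braceletStep n) x).out).val = l := by rw [hp]
      exact Subtype.ext h0

theorem prim_sum (n : ℕ) (hn : 0 < n) :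
    ∑ d ∈ n.divisors, lyndonBraceletCount d * (d * 2) = 4 * (tr (n-1)).1 := by
  rw [← card_crw, card_crw_eq_sum n hn]
  exact Finset.sum_congr rfl fun d hd => count_mul d (Nat.pos_of_mem_divisors hd)

/-- The counts of reduced bracelets on two generators of lengths 1 through 10
that are not proper powers. -/
theorem lyndonBraceletCount_eq :
    lyndonBraceletCount 1 = 2 ∧ lyndonBraceletCount 2 = 2 ∧ lyndonBraceletCount 3 = 4 ∧
    lyndonBraceletCount 4 = 9 ∧ lyndonBraceletCount 5 = 24 ∧ lyndonBraceletCount 6 = 58 ∧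
    lyndonBraceletCount 7 = 156 ∧ lyndonBraceletCount 8 = 405 ∧
    lyndonBraceletCount 9 = 1092 ∧ lyndonBraceletCount 10 = 2940 := by
  have h1 := prim_sum 1 (by norm_num)
  have h2 := prim_sum 2 (by norm_num)
  have h3 := prim_sum 3 (by norm_num)
  have h4 := prim_sum 4 (by norm_num)
  have h5 := prim_sum 5 (by norm_num)
  have h6 := prim_sum 6 (by norm_num)
  have h7 := prim_sum 7 (by norm_num)
  have h8 := prim_sum 8 (by norm_num)
  have h9 := prim_sum 9 (by norm_num)
  have h10 := prim_sum 10 (by norm_num)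
  rw [show Nat.divisors 1 = {1} by decide] at h1
  rw [show Nat.divisors 2 = {1, 2} by decide] at h2
  rw [show Nat.divisors 3 = {1, 3} by decide] at h3
  rw [show Nat.divisors 4 = {1, 2, 4} by decide] at h4
  rw [show Nat.divisors 5 = {1, 5} by decide] at h5
  rw [show Nat.divisors 6 = {1, 2, 3, 6} by decide] at h6
  rw [show Nat.divisors 7 = {1, 7} by decide] at h7
  rw [show Nat.divisors 8 = {1, 2, 4, 8} by decide] at h8
  rw [show Nat.divisors 9 = {1, 3, 9} by decide] at h9
  rw [show Nat.divisors 10 = {1, 2, 5, 10} by decide] at h10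
  simp [tr] at h1 h2 h3 h4 h5 h6 h7 h8 h9 h10
  omega
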